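/- arXiv:1411.3432 — 4 statements merged into one kernel-verified Lean document; each statement's English description precedes it below -/
import Mathlib

section
/- Suppose n ≡ 1 (mod 4). If φ is an (n+1)/2-isometry of C_n fixing 0̄ that is not an isometry, then φ is a σ_{i,j}-mapping for some i, j ∈ {1,...,n} and some bijection σ : {1,...,n}∖{i} → {1,...,n}∖{j}. Conversely, every σ_{i,j}-mapping on C_n is an (n+1)/2-isometry. -/
/-- The `σ_{i,j}`-mapping of the Boolean cube `C_n` associated with coordinates `i, j` and
a bijection `σ : {1,…,n} \ {i} → {1,…,n} \ {j}`. -/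
def sigmaMap (n : ℕ) (i j : Fin n)
    (σ : {k : Fin n // k ≠ i} ≃ {k : Fin n // k ≠ j}) :
    (Fin n → ZMod 2) → Fin n → ZMod 2 :=
  fun c k => if h : k = j then c i else c (σ.symm ⟨k, h⟩).1 + c i

namespace HalfIso

abbrev W (n : ℕ) := Fin n → ZMod 2

lemma zmod2_cases (a : ZMod 2) : a = 0 ∨ a = 1 := by
  revert a; decide

lemma reflect {α : Type*} [Finite α] (φ : α → α) (hφ : Function.Injective φ)
    (R : α → α → Prop) (hR : ∀ x y, R x y → R (φ x) (φ y)) (x y : α)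
    (h : R (φ x) (φ y)) : R x y := by
  have hinj : Function.Injective
      (fun q : {q : α × α // R q.1 q.2} =>
        (⟨(φ q.1.1, φ q.1.2), hR _ _ q.2⟩ : {q : α × α // R q.1 q.2})) := by
    rintro ⟨⟨a, b⟩, h1⟩ ⟨⟨c, d⟩, h2⟩ h
    simp only [Subtype.mk.injEq, Prod.mk.injEq] at h ⊢
    exact ⟨hφ h.1, hφ h.2⟩
  obtain ⟨⟨⟨a, b⟩, hab⟩, hq⟩ := (Finite.injective_iff_surjective.1 hinj) ⟨(φ x, φ y), h⟩
  simp only [Subtype.mk.injEq, Prod.mk.injEq] at hq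
  rw [← hφ hq.1, ← hφ hq.2]
  exact hab

lemma dist_cast {n : ℕ} (x y : W n) :
    ((hammingDist x y : ℕ) : ZMod 2) = ∑ k, x k + ∑ k, y k := by
  rw [← Finset.sum_add_distrib]
  unfold hammingDist
  rw [Finset.card_filter]
  push_cast
  refine Finset.sum_congr rfl fun k _ => ?_
  generalize x k = a
  generalize y k = b
  revert a b; decide

lemma dist_parity {n : ℕ} (x y z : W n) :
    (hammingDist x y + hammingDist y z + hammingDist x z) % 2 = 0 := by
  have h : ((hammingDist x y + hammingDist y z + hammingDist x z : ℕ) : ZMod 2) = 0 := by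
    push_cast
    rw [dist_cast, dist_cast, dist_cast]
    generalize ∑ k, x k = a
    generalize ∑ k, y k = b
    generalize ∑ k, z k = c
    revert a b c; decide
  rw [ZMod.natCast_eq_zero_iff] at h
  omega

lemma dist_eq_sum {n : ℕ} (x y : W n) :
    hammingDist x y = ∑ k, if x k ≠ y k then 1 else 0 := by
  unfold hammingDist
  rw [Finset.card_filter]

lemma dist_compl {n : ℕ} (x y : W n) :
    hammingDist x (y + 1) + hammingDist x y = n := by
  rw [dist_eq_sum, dist_eq_sum, ← Finset.sum_add_distrib]
  trans ∑ k : Fin n, 1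
  · refine Finset.sum_congr rfl fun k _ => ?_
    have h2 : (1 : ZMod 2) + 1 = 0 := rfl
    simp only [Pi.add_apply, Pi.one_apply]
    rcases zmod2_cases (x k) with h | h <;> rcases zmod2_cases (y k) with h' | h' <;>
      simp [h, h', h2]
  · simp

lemma dist_le {n : ℕ} (x y : W n) : hammingDist x y ≤ n := by
  have := dist_compl x y; omega

lemma dist_update {n : ℕ} (x y : W n) (a : Fin n) (c : ZMod 2) :
    hammingDist x (Function.update y a c) + (if x a ≠ y a then 1 else 0)
      = hammingDist x y + (if x a ≠ c then 1 else 0) := by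
  rw [dist_eq_sum, dist_eq_sum, ← Finset.add_sum_erase _ _ (Finset.mem_univ a),
    ← Finset.add_sum_erase (f := fun k => if x k ≠ y k then 1 else 0) _ (Finset.mem_univ a)]
  have : ∑ k ∈ Finset.univ.erase a, (if x k ≠ Function.update y a c k then 1 else 0)
      = ∑ k ∈ Finset.univ.erase a, (if x k ≠ y k then 1 else 0) := by
    refine Finset.sum_congr rfl fun k hk => ?_
    rw [Function.update_of_ne (Finset.ne_of_mem_erase hk)]
  rw [this]
  simp only [Function.update_self]
  omega

lemma step_down {n : ℕ} (x y : W n) (h : 0 < hammingDist x y) :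
    ∃ z, hammingDist x z + 1 = hammingDist x y ∧ hammingDist z y ≤ 1 := by
  have hne : x ≠ y := by rintro rfl; simp at h
  obtain ⟨a, ha⟩ := Function.ne_iff.1 hne
  refine ⟨Function.update y a (x a), ?_, ?_⟩
  · have := dist_update x y a (x a)
    simp only [ha, ne_eq, not_true, not_false_eq_true, if_true, if_false] at this
    omega
  · have := dist_update y y a (x a)
    rw [hammingDist_comm]
    rw [hammingDist_self] at this
    split_ifs at this <;> omega

lemma step_up {n : ℕ} (x y : W n) (h : hammingDist x y < n) :
    ∃ z, hammingDist x z = hammingDist x y + 1 ∧ hammingDist z y ≤ 1 := by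
  have h0 := dist_compl x y
  have h1 := dist_compl y x
  rw [hammingDist_comm y x] at h1
  obtain ⟨z, hz, hz'⟩ := step_down (x + 1) y (by rw [hammingDist_comm]; omega)
  refine ⟨z, ?_, hz'⟩
  have h2 := dist_compl z x
  rw [hammingDist_comm z x, hammingDist_comm z] at h2
  rw [hammingDist_comm y] at h1
  omega

lemma two_down {n : ℕ} (x y : W n) (h : 2 ≤ hammingDist x y) :
    ∃ z, hammingDist x z + 2 = hammingDist x y ∧ hammingDist z y = 2 := by
  obtain ⟨z, hz, hz'⟩ := step_down x y (by omega)
  obtain ⟨w, hw, hw'⟩ := step_down x z (by omega)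
  have := hammingDist_triangle w z y
  have := hammingDist_triangle x w y
  exact ⟨w, by omega, by omega⟩

lemma two_up {n : ℕ} (x y : W n) (h : hammingDist x y + 2 ≤ n) :
    ∃ z, hammingDist x z = hammingDist x y + 2 ∧ hammingDist z y = 2 := by
  obtain ⟨z, hz, hz'⟩ := step_up x y (by omega)
  obtain ⟨w, hw, hw'⟩ := step_up x z (by omega)
  have := hammingDist_triangle w z y
  have := hammingDist_triangle x y w
  rw [hammingDist_comm y w] at this
  exact ⟨w, by omega, by omega⟩

/-! ### Counting common neighbours -/

def common {n : ℕ} (p : ℕ) (x y : W n) : Finset (W n) :=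
  Finset.univ.filter fun z => hammingDist x z = p ∧ hammingDist y z = p

lemma card_common {n : ℕ} (p k : ℕ) (x y : W n) (h : hammingDist x y = 2 * k) (hk : k ≤ p) :
    (common p x y).card = (2 * k).choose k * (n - 2 * k).choose (p - k) := by
  classical
  set S : Finset (Fin n) := Finset.univ.filter fun a => x a ≠ y a with hS
  have hSc : S.card = 2 * k := h
  have hSc' : Sᶜ.card = n - 2 * k := by rw [Finset.card_compl, hSc]; simp
  rw [← hSc', ← hSc, ← Finset.card_powersetCard, ← Finset.card_powersetCard,
    ← Finset.card_product]
  have key : ∀ z : W n, hammingDist x z = p ∧ hammingDist y z = p ↔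
      (S.filter fun a => x a ≠ z a).card = k ∧ (Sᶜ.filter fun a => x a ≠ z a).card = p - k := by
    intro z
    have e1 : hammingDist x z = (S.filter fun a => x a ≠ z a).card +
        (Sᶜ.filter fun a => x a ≠ z a).card := by
      rw [dist_eq_sum, Finset.card_filter, Finset.card_filter, Finset.sum_add_sum_compl]
    have e2 : hammingDist y z + (S.filter fun a => x a ≠ z a).card =
        2 * k + (Sᶜ.filter fun a => x a ≠ z a).card := by
      rw [dist_eq_sum, Finset.card_filter, Finset.card_filter, ← hSc,
        ← Finset.sum_add_sum_compl S, Finset.card_eq_sum_ones]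
      rw [add_right_comm, ← Finset.sum_add_distrib]
      congr 1
      · refine Finset.sum_congr rfl fun a ha => ?_
        have : x a ≠ y a := by simpa [hS] using ha
        revert this
        generalize x a = u
        generalize y a = v
        generalize z a = w
        revert u v w; decide
      · refine Finset.sum_congr rfl fun a ha => ?_
        have : x a = y a := by simpa [hS] using ha
        rw [this]
    omega
  refine Finset.card_bij'
    (fun z _ => (S.filter fun a => x a ≠ z a, Sᶜ.filter fun a => x a ≠ z a))
    (fun T _ => fun a => if a ∈ T.1 ∪ T.2 then x a + 1 else x a) ?_ ?_ ?_ ?_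
  · intro z hz
    have hz' := (key z).1 (by simpa [common] using hz)
    simp only [Finset.mem_product, Finset.mem_powersetCard]
    exact ⟨⟨Finset.filter_subset _ _, hz'.1⟩, Finset.filter_subset _ _, hz'.2⟩
  · rintro ⟨A, B⟩ hAB
    simp only [Finset.mem_product, Finset.mem_powersetCard] at hAB
    obtain ⟨⟨hA, hA'⟩, hB, hB'⟩ := hAB
    simp only [common, Finset.mem_filter, Finset.mem_univ, true_and]
    rw [key]
    constructor
    · rw [← hA']
      congr 1
      ext a
      have h1 := @hA a
      have h2 := @hB a
      simp only [Finset.mem_compl] at h2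
      by_cases h3 : a ∈ A <;> by_cases h4 : a ∈ B <;> simp_all
    · rw [← hB']
      congr 1
      ext a
      have h1 := @hA a
      have h2 := @hB a
      simp only [Finset.mem_compl] at h2
      by_cases h3 : a ∈ A <;> by_cases h4 : a ∈ B <;> simp_all
  · intro z _
    funext a
    have : a ∈ (S.filter fun a => x a ≠ z a) ∪ (Sᶜ.filter fun a => x a ≠ z a) ↔ x a ≠ z a := by
      by_cases h : a ∈ S <;> simp [h]
    simp only [this]
    generalize x a = u
    generalize z a = w
    revert u w; decide
  · rintro ⟨A, B⟩ hAB
    simp only [Finset.mem_product, Finset.mem_powersetCard] at hAB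
    obtain ⟨⟨hA, hA'⟩, hB, hB'⟩ := hAB
    simp only [Prod.mk.injEq]
    constructor
    · ext a
      have h1 := @hA a
      have h2 := @hB a
      simp only [Finset.mem_compl] at h2
      by_cases h3 : a ∈ A <;> by_cases h4 : a ∈ B <;> simp_all
    · ext a
      have h1 := @hA a
      have h2 := @hB a
      simp only [Finset.mem_compl] at h2
      by_cases h3 : a ∈ A <;> by_cases h4 : a ∈ B <;> simp_all

lemma cb_step (a b : ℕ) (hab : a < b) (X Y : ℕ) (hY : 0 < Y)
    (h : a.centralBinom * X ≤ Y * b.centralBinom) :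
    (a + 1).centralBinom * X < Y * (b + 1).centralBinom := by
  have ha := Nat.succ_mul_centralBinom_succ a
  have hb := Nat.succ_mul_centralBinom_succ b
  have hp : 0 < Y * b.centralBinom := Nat.mul_pos hY (Nat.centralBinom_pos b)
  have h1 : (a + 1) * (b + 1) * ((a + 1).centralBinom * X)
      = 2 * (2 * a + 1) * (b + 1) * (a.centralBinom * X) := by
    linear_combination (b + 1) * X * ha
  have h2 : (a + 1) * (b + 1) * (Y * (b + 1).centralBinom)
      = 2 * (2 * b + 1) * (a + 1) * (Y * b.centralBinom) := by
    linear_combination (a + 1) * Y * hb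
  have h3 : 2 * (2 * a + 1) * (b + 1) < 2 * (2 * b + 1) * (a + 1) := by nlinarith
  refine lt_of_mul_lt_mul_left (a := (a + 1) * (b + 1)) ?_ (Nat.zero_le _)
  rw [h1, h2]
  calc _ ≤ 2 * (2 * a + 1) * (b + 1) * (Y * b.centralBinom) := Nat.mul_le_mul_left _ h
    _ < _ := Nat.mul_lt_mul_of_pos_right h3 hp

lemma cb_lt (j q : ℕ) (hq : 2 ≤ q) :
    (1 + (j + 1)).centralBinom * q.centralBinom
      < Nat.centralBinom 1 * (q + (j + 1)).centralBinom := by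
  have hpos : 0 < Nat.centralBinom 1 := Nat.centralBinom_pos 1
  induction j with
  | zero => exact cb_step 1 q (by omega) _ _ hpos le_rfl
  | succ j ih => exact cb_step (1 + (j + 1)) (q + (j + 1)) (by omega) _ _ hpos ih.le

lemma two_choose (q : ℕ) (hq : 1 ≤ q) : 2 * (2 * q - 1).choose q = q.centralBinom := by
  obtain ⟨r, rfl⟩ : ∃ r, q = r + 1 := ⟨q - 1, by omega⟩
  rw [Nat.centralBinom_eq_two_mul_choose]
  have e : 2 * (r + 1) = (2 * r + 1) + 1 := by ring
  have e' : 2 * (r + 1) - 1 = 2 * r + 1 := by omega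
  have h1 : (2 * r + 1 + 1).choose (r + 1) = (2 * r + 1).choose r + (2 * r + 1).choose (r + 1) :=
    Nat.choose_succ_succ _ _
  have h2 := Nat.choose_symm_half r
  rw [e', e, h1]
  omega

lemma two_card_common {n p : ℕ} (hn : n + 1 = 2 * p) (k : ℕ) (hkp : k + 1 ≤ p)
    (x y : W n) (h : hammingDist x y = 2 * k) :
    2 * (common p x y).card = k.centralBinom * (p - k).centralBinom := by
  rw [card_common p k x y h (by omega), ← two_choose (p - k) (by omega),
    Nat.centralBinom_eq_two_mul_choose]
  have : n - 2 * k = 2 * (p - k) - 1 := by omega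
  rw [this]
  ring

lemma common_max {n p : ℕ} (hn : n + 1 = 2 * p) (x y : W n) (hxy : x ≠ y)
    (h : Nat.centralBinom 1 * (p - 1).centralBinom ≤ 2 * (common p x y).card) :
    hammingDist x y = 2 ∨ hammingDist x y + 1 = n := by
  have hpos : 0 < (common p x y).card := by
    have := Nat.mul_pos (Nat.centralBinom_pos 1) (Nat.centralBinom_pos (p - 1))
    omega
  obtain ⟨z, hz⟩ := Finset.card_pos.1 hpos
  simp only [common, Finset.mem_filter, Finset.mem_univ, true_and] at hz
  have hpar := dist_parity x y z
  have hle := dist_le x y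
  have h0 : hammingDist x y ≠ 0 := by simpa using hxy
  obtain ⟨k, hk⟩ : ∃ k, hammingDist x y = 2 * k := ⟨hammingDist x y / 2, by omega⟩
  rw [two_card_common hn k (by omega) x y hk] at h
  by_contra hcon
  obtain ⟨j, rfl⟩ : ∃ j, k = 1 + (j + 1) := ⟨k - 2, by omega⟩
  have := cb_lt j (p - (1 + (j + 1))) (by omega)
  have e : p - (1 + (j + 1)) + (j + 1) = p - 1 := by omega
  rw [e] at this
  omega

/-- folded distance two is preserved -/
lemma pres_two {n p : ℕ} (hn : n + 1 = 2 * p) (φ : W n → W n) (hφ : Function.Injective φ)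
    (hp : ∀ x y, hammingDist x y = p → hammingDist (φ x) (φ y) = p) (hp2 : 2 ≤ p)
    (x y : W n) (h : hammingDist x y = 2) :
    hammingDist (φ x) (φ y) = 2 ∨ hammingDist (φ x) (φ y) + 1 = n := by
  apply common_max hn
  · intro h'
    rw [hφ h', hammingDist_self] at h
    omega
  · rw [← two_card_common hn 1 (by omega) x y (by omega)]
    have : (common p x y).card ≤ (common p (φ x) (φ y)).card := by
      refine Finset.card_le_card_of_injOn φ ?_ hφ.injOn
      intro z hz
      simp only [common, Finset.coe_filter, Finset.mem_univ, true_and, Set.mem_ofPred_eq] at hz ⊢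
      exact ⟨hp _ _ hz.1, hp _ _ hz.2⟩
    omega

lemma pres_R {n p : ℕ} (hn : n + 1 = 2 * p) (φ : W n → W n) (hφ : Function.Injective φ)
    (hp : ∀ x y, hammingDist x y = p → hammingDist (φ x) (φ y) = p) (hp2 : 2 ≤ p)
    (hodd : p % 2 = 1) (s : ℕ) :
    ∀ x y, (hammingDist x y % 2 = 1 ∧ p ≤ hammingDist x y + 2 * s ∧
        hammingDist x y ≤ p + 2 * s) →
      (hammingDist (φ x) (φ y) % 2 = 1 ∧ p ≤ hammingDist (φ x) (φ y) + 2 * s ∧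
        hammingDist (φ x) (φ y) ≤ p + 2 * s) := by
  induction s with
  | zero =>
    intro x y h
    have := hp x y (by omega)
    omega
  | succ s ih =>
    intro x y h
    have hle := dist_le x y
    have main : ∀ z, hammingDist z y = 2 → (hammingDist x z % 2 = 1 ∧
        p ≤ hammingDist x z + 2 * s ∧ hammingDist x z ≤ p + 2 * s) →
        (hammingDist (φ x) (φ y) % 2 = 1 ∧ p ≤ hammingDist (φ x) (φ y) + 2 * (s + 1) ∧
        hammingDist (φ x) (φ y) ≤ p + 2 * (s + 1)) := by
      intro z hz hz'
      have h1 := ih x z hz'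
      have h2 := pres_two hn φ hφ hp hp2 z y hz
      have h3 := dist_parity (φ x) (φ z) (φ y)
      have h4 := hammingDist_triangle (φ x) (φ z) (φ y)
      have h5 := hammingDist_triangle (φ x) (φ y) (φ z)
      rw [hammingDist_comm (φ y) (φ z)] at h5
      have h6 := dist_compl (φ x) (φ z)
      have h7 := dist_compl (φ y) (φ z)
      rw [hammingDist_comm (φ y) (φ z)] at h7
      have h8 := hammingDist_triangle (φ x) (φ z + 1) (φ y)
      have h9 := hammingDist_triangle (φ x) (φ y) (φ z + 1)
      rw [hammingDist_comm (φ z + 1)] at h8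
      omega
    by_cases c1 : p < hammingDist x y
    · obtain ⟨z, hz, hz'⟩ := two_down x y (by omega)
      exact main z hz' (by omega)
    · by_cases c2 : hammingDist x y < p
      · obtain ⟨z, hz, hz'⟩ := two_up x y (by omega)
        exact main z hz' (by omega)
      · have := ih x y (by omega)
        omega

/-- adjacency in the folded cube -/
def Adj {n : ℕ} (x y : W n) : Prop := hammingDist x y = 1 ∨ hammingDist x y = n

lemma pres_adj {n p : ℕ} (hn : n + 1 = 2 * p) (φ : W n → W n) (hφ : Function.Injective φ)
    (hp : ∀ x y, hammingDist x y = p → hammingDist (φ x) (φ y) = p) (hp2 : 2 ≤ p)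
    (hodd : p % 2 = 1) (x y : W n) (h : Adj x y) : Adj (φ x) (φ y) := by
  obtain ⟨m, hm⟩ : ∃ m, p = 2 * m + 3 := ⟨(p - 3) / 2, by omega⟩
  have h1 := pres_R hn φ hφ hp hp2 hodd (m + 1) x y
  have h2 := reflect φ hφ (fun x y => hammingDist x y % 2 = 1 ∧ p ≤ hammingDist x y + 2 * m ∧
        hammingDist x y ≤ p + 2 * m) (pres_R hn φ hφ hp hp2 hodd m) x y
  have h3 := dist_le (φ x) (φ y)
  have h4 := dist_le x y
  unfold Adj at *
  omega

/-- rigidity -/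
lemma rigid {n : ℕ} (hn : 5 ≤ n) (θ : W n → W n) (hθ : Function.Injective θ)
    (hadj : ∀ x y, Adj x y → Adj (θ x) (θ y)) (h0 : θ 0 = 0)
    (h1 : ∀ a, θ (Pi.single a 1) = Pi.single a 1) (w : ℕ) :
    ∀ x, hammingDist 0 x = w → θ x = x := by
  induction w using Nat.strong_induction_on with
  | _ w ih =>
    intro x hx
    have upd : ∀ (y : W n) (a : Fin n), y a ≠ 0 →
        hammingDist 0 (Function.update y a 0) + 1 = hammingDist 0 y ∧
        hammingDist y (Function.update y a 0) = 1 := by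
      intro y a ha
      have h1 := dist_update 0 y a 0
      have h2 := dist_update y y a 0
      have ha' := ha.symm
      simp only [Pi.zero_apply, ne_eq, ha, ha', not_true, not_false_eq_true, if_true, if_false,
        hammingDist_self] at h1 h2
      omega
    by_cases hx0 : x = 0
    · rw [hx0, h0]
    obtain ⟨a, ha⟩ := Function.ne_iff.1 hx0
    rw [Pi.zero_apply] at ha
    have hua := upd x a ha
    set u := Function.update x a 0 with hu
    by_cases hu0 : u = 0
    · have : x = Pi.single a 1 := by
        funext k
        by_cases hk : k = a
        · subst hk
          rw [Pi.single_eq_same]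
          exact (zmod2_cases _).resolve_left ha
        · rw [Pi.single_eq_of_ne hk]
          have := congrFun hu0 k
          rwa [hu, Function.update_of_ne hk] at this
      rw [this, h1]
    obtain ⟨b, hb⟩ := Function.ne_iff.1 hu0
    rw [Pi.zero_apply] at hb
    have hba : b ≠ a := by
      rintro rfl
      simp [hu] at hb
    have hxb : x b ≠ 0 := by rwa [hu, Function.update_of_ne hba] at hb
    have hvb := upd x b hxb
    have hyb := upd u b hb
    set v := Function.update x b 0 with hv
    set y := Function.update u b 0 with hy
    have tu : θ u = u := ih _ (by omega) u rfl
    have tv : θ v = v := ih _ (by omega) v rfl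
    have ty : θ y = y := ih _ (by omega) y rfl
    have au := hadj x u (Or.inl hua.2)
    have av := hadj x v (Or.inl hvb.2)
    rw [tu] at au
    rw [tv] at av
    have hne : θ x ≠ y := by
      rw [← ty]
      intro h
      have := hθ h
      rw [← this] at hyb
      omega
    generalize hz : θ x = z at *
    have hva : v a = x a := by rw [hv, Function.update_of_ne hba.symm]
    have hua0 : u a = 0 := by rw [hu, Function.update_self]
    have hvb0 : v b = 0 := by rw [hv, Function.update_self]
    have hub : u b = x b := by rw [hu, Function.update_of_ne hba]
    have huv : u ≠ v := fun h => ha (by rw [← hva, ← h, hua0])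
    have huv2 : hammingDist u v ≤ 2 := by
      have := hammingDist_triangle u x v
      rw [hammingDist_comm u x] at this
      omega
    have t1 := hammingDist_triangle z u v
    have t2 := hammingDist_triangle z v u
    rw [hammingDist_comm v u] at t2
    have d1 : hammingDist z u = 1 ∧ hammingDist z v = 1 := by
      rcases au with au | au <;> rcases av with av | av
      · exact ⟨au, av⟩
      · omega
      · omega
      · exfalso
        apply huv
        have e1 := dist_compl u z
        have e2 := dist_compl v z
        rw [hammingDist_comm u z] at e1
        rw [hammingDist_comm v z] at e2
        have f1 : hammingDist u (z + 1) = 0 := by omega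
        have f2 : hammingDist v (z + 1) = 0 := by omega
        rw [hammingDist_eq_zero] at f1 f2
        rw [f1, f2]
    obtain ⟨du, dv⟩ := d1
    -- z differs from u at exactly one coordinate
    have uniq : ∀ (s t : W n), hammingDist s t = 1 → ∀ k l, s k ≠ t k → s l ≠ t l → k = l := by
      intro s t hst k l hk hl
      unfold hammingDist at hst
      exact Finset.card_le_one.1 hst.le k (by simpa using hk) l (by simpa using hl)
    have other : ∀ k, k ≠ a → k ≠ b → z k = x k := by
      intro k hka hkb
      by_contra hk
      have uk : u k = x k := by rw [hu, Function.update_of_ne hka]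
      have vk : v k = x k := by rw [hv, Function.update_of_ne hkb]
      have hza : z a = u a := by
        by_contra hh
        exact hka (uniq z u du k a (by rw [uk]; exact hk) hh)
      have hza' : z a = v a := by
        by_contra hh
        exact hka (uniq z v dv k a (by rw [vk]; exact hk) hh)
      rw [hza, hua0, hva] at hza'
      exact ha hza'.symm
    have xa : x a = 1 := (zmod2_cases _).resolve_left ha
    have xb : x b = 1 := (zmod2_cases _).resolve_left hxb
    have final : z a = x a ∧ z b = x b := by
      have n1 : ¬ (z a ≠ u a ∧ z b ≠ u b) := fun h => hba (uniq z u du b a h.2 h.1)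
      have n2 : ¬ (z a ≠ v a ∧ z b ≠ v b) := fun h => hba (uniq z v dv b a h.2 h.1)
      have n3 : ¬ (z a = 0 ∧ z b = 0) := by
        rintro ⟨za, zb⟩
        apply hne
        funext k
        by_cases hkb : k = b
        · rw [hkb, zb, hy, Function.update_self]
        · by_cases hka : k = a
          · rw [hka, za, hy, Function.update_of_ne hba.symm, hua0]
          · rw [other k hka hkb, hy, Function.update_of_ne hkb, hu, Function.update_of_ne hka]
      have n4 : ¬ (z a = u a ∧ z b = u b) := by
        rintro ⟨za, zb⟩
        have : z = u := by
          funext k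
          by_cases hkb : k = b
          · rw [hkb, zb]
          · by_cases hka : k = a
            · rw [hka, za]
            · rw [other k hka hkb, hu, Function.update_of_ne hka]
        rw [this, hammingDist_self] at du
        omega
      have n5 : ¬ (z a = v a ∧ z b = v b) := by
        rintro ⟨za, zb⟩
        have : z = v := by
          funext k
          by_cases hkb : k = b
          · rw [hkb, zb]
          · by_cases hka : k = a
            · rw [hka, za]
            · rw [other k hka hkb, hv, Function.update_of_ne hkb]
        rw [this, hammingDist_self] at dv
        omega
      rw [hua0, hub, xb] at n1 n4
      rw [hva, hvb0, xa] at n2 n5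
      rw [xa, xb]
      rcases zmod2_cases (z a) with h | h <;> rcases zmod2_cases (z b) with h' | h' <;>
        simp_all
    funext k
    by_cases hkb : k = b
    · rw [hkb, final.2]
    · by_cases hka : k = a
      · rw [hka, final.1]
      · exact other k hka hkb

lemma agree {n : ℕ} (hn : 5 ≤ n) (φ ψ : W n → W n) (hφ : Function.Injective φ)
    (hψ : Function.Injective ψ)
    (aφ : ∀ x y, Adj x y → Adj (φ x) (φ y)) (aψ : ∀ x y, Adj x y → Adj (ψ x) (ψ y))
    (h0 : φ 0 = ψ 0) (h1 : ∀ a, φ (Pi.single a 1) = ψ (Pi.single a 1)) : φ = ψ := by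
  have hψb : Function.Bijective ψ := ⟨hψ, Finite.injective_iff_surjective.1 hψ⟩
  let e := Equiv.ofBijective ψ hψb
  have he : ∀ x, e x = ψ x := fun _ => rfl
  have hr : ∀ x, ψ (e.symm x) = x := fun x => e.apply_symm_apply x
  funext x
  have := rigid hn (fun x => e.symm (φ x)) (e.symm.injective.comp hφ) ?_ ?_ ?_ _ x rfl
  · rw [← hr (φ x), this]
  · intro x y h
    apply reflect ψ hψ Adj aψ
    rw [hr, hr]
    exact aφ x y h
  · rw [h0, ← he, e.symm_apply_apply]
  · intro a
    rw [h1, ← he, e.symm_apply_apply]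

lemma sigma_dist {n : ℕ} (i j : Fin n)
    (σ : {k : Fin n // k ≠ i} ≃ {k : Fin n // k ≠ j}) (x y : W n) :
    hammingDist (sigmaMap n i j σ x) (sigmaMap n i j σ y) = hammingDist x y ∨
    (hammingDist (sigmaMap n i j σ x) (sigmaMap n i j σ y) + hammingDist x y = n + 1 ∧
      x ≠ y) := by
  have e1 : hammingDist x y = (if x i ≠ y i then 1 else 0) +
      ∑ k : {k : Fin n // k ≠ i}, if x k.1 ≠ y k.1 then 1 else 0 := by
    rw [dist_eq_sum, ← Fintype.sum_subtype_add_sum_subtype (fun k => k = i)]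
    congr 1
    simp only [Finset.univ_unique, Finset.sum_singleton]
    rfl
  have e2 : hammingDist (sigmaMap n i j σ x) (sigmaMap n i j σ y) =
      (if x i ≠ y i then 1 else 0) +
      ∑ k : {k : Fin n // k ≠ i}, if x k.1 + x i ≠ y k.1 + y i then 1 else 0 := by
    rw [dist_eq_sum, ← Fintype.sum_subtype_add_sum_subtype (fun k => k = j),
      ← σ.symm.sum_comp]
    congr 1
    · simp only [Finset.univ_unique, Finset.sum_singleton]
      have hd : ((default : {k : Fin n // k = j}) : Fin n) = j := rfl
      simp only [sigmaMap, hd, dif_pos]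
    · refine Finset.sum_congr rfl fun k _ => ?_
      have := k.2
      simp only [sigmaMap, dif_neg this]
  by_cases h : x i = y i
  · left
    rw [e1, e2]
    simp [h]
  · right
    refine ⟨?_, fun hh => h (by rw [hh])⟩
    rw [e1, e2]
    have : ∑ k : {k : Fin n // k ≠ i}, (if x k.1 + x i ≠ y k.1 + y i then 1 else 0) +
        ∑ k : {k : Fin n // k ≠ i}, (if x k.1 ≠ y k.1 then 1 else 0) = n - 1 := by
      rw [← Finset.sum_add_distrib]
      trans ∑ k : {k : Fin n // k ≠ i}, 1
      · refine Finset.sum_congr rfl fun k _ => ?_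
        revert h
        generalize x i = a
        generalize y i = b
        generalize x k.1 = c
        generalize y k.1 = d
        revert a b c d; decide
      · simp
    have := i.pos
    simp only [ne_eq, h, not_false_eq_true, if_true] at *
    omega

lemma sigma_inj {n : ℕ} (i j : Fin n)
    (σ : {k : Fin n // k ≠ i} ≃ {k : Fin n // k ≠ j}) :
    Function.Injective (sigmaMap n i j σ) := by
  intro x y h
  have h1 := sigma_dist i j σ x y
  have h2 := dist_le x y
  rw [h, hammingDist_self] at h1
  rw [← hammingDist_eq_zero]
  omega

lemma sigma_adj {n : ℕ} (i j : Fin n)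
    (σ : {k : Fin n // k ≠ i} ≃ {k : Fin n // k ≠ j}) (x y : W n) (h : Adj x y) :
    Adj (sigmaMap n i j σ x) (sigmaMap n i j σ y) := by
  have h1 := sigma_dist i j σ x y
  unfold Adj at *
  omega

lemma adj_zero {n : ℕ} (x : W n) (h : Adj 0 x) : (∃ a, x = Pi.single a 1) ∨ x = 1 := by
  rcases h with h | h
  · left
    unfold hammingDist at h
    obtain ⟨a, ha⟩ := Finset.card_eq_one.1 h
    refine ⟨a, ?_⟩
    funext k
    have hk : (0 : W n) k ≠ x k ↔ k = a := by
      have := Finset.ext_iff.1 ha k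
      simpa using this
    by_cases hka : k = a
    · subst hka
      have := hk.2 rfl
      rw [Pi.single_eq_same]
      exact (zmod2_cases _).resolve_left this.symm
    · rw [Pi.single_eq_of_ne hka]
      by_contra hh
      exact hka (hk.1 (Ne.symm hh))
  · right
    have := dist_compl x 0
    rw [hammingDist_comm x 0] at this
    have h2 : hammingDist x (0 + 1) = 0 := by omega
    rw [hammingDist_eq_zero, zero_add] at h2
    exact h2

lemma zero_adj_single {n : ℕ} (a : Fin n) : Adj (0 : W n) (Pi.single a 1) := by
  left
  have := dist_update (0 : W n) 0 a 1
  simpa [Pi.single] using this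

lemma zero_adj_one {n : ℕ} : Adj (0 : W n) 1 := by
  right
  have := dist_compl (0 : W n) 0
  simpa using this

lemma single_inj {n : ℕ} {a b : Fin n} (h : (Pi.single a 1 : W n) = Pi.single b 1) : a = b := by
  by_contra hab
  have := congrFun h a
  rw [Pi.single_eq_same, Pi.single_eq_of_ne hab] at this
  exact one_ne_zero this

lemma forward {n : ℕ} (hn : 5 ≤ n) (φ : W n → W n) (hφ : Function.Bijective φ) (h0 : φ 0 = 0)
    (aφ : ∀ x y, Adj x y → Adj (φ x) (φ y))
    (hnot : ¬(∀ x y, hammingDist (φ x) (φ y) = hammingDist x y)) :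
    ∃ (i j : Fin n) (σ : {k : Fin n // k ≠ i} ≃ {k : Fin n // k ≠ j}),
        φ = sigmaMap n i j σ := by
  classical
  have nb : ∀ x, Adj 0 x → (∃ a, φ x = Pi.single a 1) ∨ φ x = 1 := by
    intro x hx
    apply adj_zero
    have := aφ _ _ hx
    rwa [h0] at this
  have sne : ∀ a : Fin n, (Pi.single a 1 : W n) ≠ 1 := by
    intro a h
    have : Nontrivial (Fin n) := Fin.nontrivial_iff_two_le.2 (by omega)
    obtain ⟨b, hb⟩ := exists_ne a
    have := congrFun h b
    rw [Pi.single_eq_of_ne hb] at this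
    exact zero_ne_one this
  obtain ⟨x, hx⟩ := hφ.2 1
  have hx0 : Adj 0 x := by
    apply reflect φ hφ.1 Adj aφ
    rw [h0, hx]
    exact zero_adj_one
  rcases adj_zero x hx0 with ⟨i, rfl⟩ | rfl
  · obtain ⟨j, hj⟩ : ∃ j, φ 1 = Pi.single j 1 := by
      refine (nb 1 zero_adj_one).resolve_right fun h => ?_
      exact sne i (hφ.1 (hx.trans h.symm))
    have ht : ∀ a : {k : Fin n // k ≠ i}, ∃ b : {k : Fin n // k ≠ j},
        φ (Pi.single a.1 1) = Pi.single b.1 1 := by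
      rintro ⟨a, ha⟩
      obtain ⟨b, hb⟩ := (nb _ (zero_adj_single a)).resolve_right fun h =>
        ha (single_inj (hφ.1 (h.trans hx.symm)))
      refine ⟨⟨b, ?_⟩, hb⟩
      rintro rfl
      exact sne a (hφ.1 (hb.trans hj.symm))
    choose τ hτ using ht
    have τinj : Function.Injective τ := by
      intro a b hab
      apply Subtype.ext
      apply single_inj
      apply hφ.1
      rw [hτ, hτ, hab]
    have τbij : Function.Bijective τ := by
      rw [Fintype.bijective_iff_injective_and_card]
      exact ⟨τinj, by simp⟩
    refine ⟨i, j, Equiv.ofBijective τ τbij, ?_⟩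
    apply agree hn _ _ hφ.1 (sigma_inj _ _ _) aφ (sigma_adj _ _ _)
    · rw [h0]
      funext k
      simp [sigmaMap]
    · intro a
      by_cases ha : a = i
      · subst ha
        rw [hx]
        funext k
        unfold sigmaMap
        split_ifs with hk
        · simp
        · have := ((Equiv.ofBijective τ τbij).symm ⟨k, hk⟩).2
          rw [Pi.single_eq_of_ne this, Pi.single_eq_same]
          simp
      · rw [hτ ⟨a, ha⟩]
        funext k
        unfold sigmaMap
        rw [Pi.single_eq_of_ne (Ne.symm ha)]
        split_ifs with hk
        · rw [hk, Pi.single_eq_of_ne (τ ⟨a, ha⟩).2.symm]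
        · rw [add_zero]
          by_cases hka : k = (τ ⟨a, ha⟩).1
          · have : (Equiv.ofBijective τ τbij).symm ⟨k, hk⟩ = ⟨a, ha⟩ := by
              rw [Equiv.symm_apply_eq]
              exact Subtype.ext hka
            rw [this, hka, Pi.single_eq_same, Pi.single_eq_same]
          · rw [Pi.single_eq_of_ne hka, Pi.single_eq_of_ne]
            intro h
            apply hka
            have : (Equiv.ofBijective τ τbij).symm ⟨k, hk⟩ = ⟨a, ha⟩ := Subtype.ext h
            rw [Equiv.symm_apply_eq] at this
            exact congrArg Subtype.val this
  · exfalso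
    have ht : ∀ a : Fin n, ∃ b : Fin n, φ (Pi.single a 1) = Pi.single b 1 := by
      intro a
      exact (nb _ (zero_adj_single a)).resolve_right fun h => sne a (hφ.1 (h.trans hx.symm))
    choose τ hτ using ht
    have τinj : Function.Injective τ := by
      intro a b hab
      apply single_inj
      apply hφ.1
      rw [hτ, hτ, hab]
    have τbij : Function.Bijective τ := ⟨τinj, Finite.injective_iff_surjective.1 τinj⟩
    let e := Equiv.ofBijective τ τbij
    let ψ : W n → W n := fun c k => c (e.symm k)
    have hd : ∀ x y, hammingDist (ψ x) (ψ y) = hammingDist x y := by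
      intro x y
      rw [dist_eq_sum, dist_eq_sum]
      exact e.symm.sum_comp (fun k => if x k ≠ y k then 1 else 0)
    have : φ = ψ := by
      apply agree hn _ _ hφ.1 _ aφ
      · intro x y h
        unfold Adj at *
        rwa [hd]
      · rw [h0]; rfl
      · intro a
        rw [hτ]
        funext k
        change _ = (Pi.single a 1 : W n) (e.symm k)
        by_cases hka : k = τ a
        · have : e.symm k = a := by rw [Equiv.symm_apply_eq]; exact hka
          rw [this, hka, Pi.single_eq_same, Pi.single_eq_same]
        · rw [Pi.single_eq_of_ne hka, Pi.single_eq_of_ne]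
          intro h
          rw [Equiv.symm_apply_eq] at h
          exact hka h
      · intro x y h
        have := hd x y
        rw [h, hammingDist_self] at this
        exact hammingDist_eq_zero.1 this.symm
    exact hnot (by rw [this]; exact hd)

end HalfIso

/-- For `n ≡ 1 (mod 4)`: every `(n+1)/2`-isometry of `C_n` fixing `0̄` that is not an
isometry is a `σ_{i,j}`-mapping; conversely, every `σ_{i,j}`-mapping is an
`(n+1)/2`-isometry. -/
theorem halfPlusOneIsometry_classification_one_mod_four (n : ℕ) (hn : n % 4 = 1) :
    (∀ φ : (Fin n → ZMod 2) → Fin n → ZMod 2,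
      Function.Bijective φ → φ 0 = 0 →
      (∀ x y, hammingDist x y = (n + 1) / 2 →
        hammingDist (φ x) (φ y) = (n + 1) / 2) →
      ¬(∀ x y, hammingDist (φ x) (φ y) = hammingDist x y) →
      ∃ (i j : Fin n) (σ : {k : Fin n // k ≠ i} ≃ {k : Fin n // k ≠ j}),
        φ = sigmaMap n i j σ) ∧
    (∀ (i j : Fin n) (σ : {k : Fin n // k ≠ i} ≃ {k : Fin n // k ≠ j}),
      Function.Bijective (sigmaMap n i j σ) ∧
      ∀ x y, hammingDist x y = (n + 1) / 2 →
        hammingDist (sigmaMap n i j σ x) (sigmaMap n i j σ y) = (n + 1) / 2) := by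
  refine ⟨?_, ?_⟩
  · intro φ hφ h0 hp hnot
    by_cases h5 : 5 ≤ n
    · exact HalfIso.forward h5 φ hφ h0
        (HalfIso.pres_adj (p := (n + 1) / 2) (by omega) φ hφ.1 hp (by omega) (by omega)) hnot
    · exfalso
      have h1 : n = 1 := by omega
      apply hnot
      intro x y
      have a1 := HalfIso.dist_le x y
      have a2 := HalfIso.dist_le (φ x) (φ y)
      by_cases hxy : x = y
      · rw [hxy, hammingDist_self, hammingDist_self]
      · have b1 := hammingDist_pos.2 hxy
        have b2 := hammingDist_pos.2 (hφ.1.ne hxy)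
        omega
  · intro i j σ
    refine ⟨⟨HalfIso.sigma_inj i j σ,
      Finite.injective_iff_surjective.1 (HalfIso.sigma_inj i j σ)⟩, ?_⟩
    intro x y h
    have := HalfIso.sigma_dist i j σ x y
    omega
end

section
/- Suppose n ≡ 3 (mod 4) and n ≥ 3. Then every (n−1)/2-isometry of C_n is an {(n−1)/2, (n+1)/2, n}-isometry. -/
lemma aux_cb_step (a b : ℕ) (h : a < b) :
    Nat.centralBinom (a+1) * Nat.centralBinom b < Nat.centralBinom a * Nat.centralBinom (b+1) := by
  have h1 := Nat.succ_mul_centralBinom_succ a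
  have h2 := Nat.succ_mul_centralBinom_succ b
  have pa := Nat.centralBinom_pos a
  have pb := Nat.centralBinom_pos b
  have hpos : 0 < (a+1)*(b+1) := by positivity
  have e1 : ((a+1)*(b+1)) * (Nat.centralBinom (a+1) * Nat.centralBinom b)
      = (2*(2*a+1)*(b+1)) * (Nat.centralBinom a * Nat.centralBinom b) := by
    linear_combination ((b+1) * Nat.centralBinom b) * h1
  have e2 : ((a+1)*(b+1)) * (Nat.centralBinom a * Nat.centralBinom (b+1))
      = (2*(2*b+1)*(a+1)) * (Nat.centralBinom a * Nat.centralBinom b) := by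
    linear_combination ((a+1) * Nat.centralBinom a) * h2
  refine lt_of_mul_lt_mul_left ?_ hpos.le
  rw [e1, e2]
  refine Nat.mul_lt_mul_of_pos_right ?_ (by positivity)
  nlinarith

lemma aux_cb_mid (j : ℕ) : ∀ a : ℕ,
    Nat.centralBinom (a+j+1) * Nat.centralBinom (a+j+1)
      < Nat.centralBinom a * Nat.centralBinom (a+2*j+2) := by
  induction j with
  | zero => intro a; exact aux_cb_step a (a+1) (by omega)
  | succ j ih =>
    intro a
    have h1 := ih (a+1)
    have h2 := aux_cb_step a (a+2*j+3) (by omega)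
    have e1 : a + 1 + j + 1 = a + (j+1) + 1 := by omega
    have e2 : a + 1 + 2*j + 2 = a + 2*j+3 := by omega
    rw [e1, e2] at h1
    exact h1.trans h2

lemma aux_two_choose (m : ℕ) : 2 * (2*m+1).choose m = Nat.centralBinom (m+1) := by
  rw [Nat.centralBinom_eq_two_mul_choose]
  have h : 2*(m+1) = (2*m+1)+1 := by ring
  rw [h, Nat.choose_succ_succ]
  have := Nat.choose_symm_half m
  rw [this]; ring

lemma aux_f_inj (k e : ℕ) (he : e ≤ 2*k+1)
    (h : (2*e).choose e * (2*(2*k+1)+1-2*e).choose (2*k+1-e)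
      = (2*(k+1)).choose (k+1) * (2*(2*k+1)+1-2*(k+1)).choose (2*k+1-(k+1))) : e = k+1 := by
  have key : ∀ e ≤ 2*k+1, 2 * ((2*e).choose e * (2*(2*k+1)+1-2*e).choose (2*k+1-e))
      = Nat.centralBinom e * Nat.centralBinom (2*k+2-e) := by
    intro e he
    have h1 := aux_two_choose (2*k+1-e)
    have e1 : 2*(2*k+1-e)+1 = 2*(2*k+1)+1-2*e := by omega
    have e2 : 2*k+1-e+1 = 2*k+2-e := by omega
    rw [e1, e2] at h1
    rw [← h1, Nat.centralBinom_eq_two_mul_choose]; ring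
  have h1 := key e he
  have h2 := key (k+1) (by omega)
  rw [h, h2, show 2*k+2-(k+1) = k+1 by omega] at h1
  rcases lt_trichotomy e (k+1) with hlt | heq | hgt
  · obtain ⟨j, hj⟩ : ∃ j, k = e + j := ⟨k - e, by omega⟩
    have h3 := aux_cb_mid j e
    rw [show e+2*j+2 = 2*k+2-e by omega, show e+j+1 = k+1 by omega] at h3
    omega
  · exact heq
  · obtain ⟨j, hj⟩ : ∃ j, e = k+2+j := ⟨e-(k+2), by omega⟩
    have h3 := aux_cb_mid j (2*k+2-e)
    rw [show 2*k+2-e+2*j+2 = e by omega, show 2*k+2-e+j+1 = k+1 by omega, 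
      mul_comm (Nat.centralBinom (2*k+2-e))] at h3
    omega

/-- flip the coordinates of `x` in `S`. -/
def auxFlip {n : ℕ} (x : Fin n → ZMod 2) (S : Finset (Fin n)) : Fin n → ZMod 2 :=
  fun i => if i ∈ S then x i + 1 else x i

/-- the set of coordinates where `x` and `y` differ. -/
def auxD {n : ℕ} (x y : Fin n → ZMod 2) : Finset (Fin n) :=
  Finset.univ.filter fun i => x i ≠ y i

lemma aux_mem_D {n : ℕ} (x y : Fin n → ZMod 2) (i : Fin n) : i ∈ auxD x y ↔ x i ≠ y i :=
  Finset.mem_filter.trans (by simp)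

lemma aux_dist {n : ℕ} (x y : Fin n → ZMod 2) : hammingDist x y = (auxD x y).card := rfl

lemma aux_ne {a b : ZMod 2} : a ≠ b ↔ b = a + 1 := by revert a b; decide

lemma aux_D_flip {n : ℕ} (x : Fin n → ZMod 2) (S : Finset (Fin n)) :
    auxD x (auxFlip x S) = S := by
  ext i
  by_cases h : i ∈ S <;> simp [auxD, auxFlip, h]

lemma aux_flip_D {n : ℕ} (x y : Fin n → ZMod 2) : auxFlip x (auxD x y) = y := by
  funext i
  by_cases h : x i = y i
  · simp [auxD, auxFlip, h]
  · simp [auxD, auxFlip, h, (aux_ne.1 h)]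

lemma aux_D_flip' {n : ℕ} (x y : Fin n → ZMod 2) (S : Finset (Fin n)) :
    auxD y (auxFlip x S) = symmDiff (auxD x y) S := by
  ext i
  simp only [aux_mem_D, auxFlip, Finset.mem_symmDiff]
  by_cases h : i ∈ S <;> simp only [h, if_true, if_false]
  · generalize x i = a; generalize y i = b
    revert a b; decide
  · generalize x i = a; generalize y i = b
    revert a b; decide

lemma aux_card_symmDiff {n : ℕ} (D S : Finset (Fin n)) :
    (symmDiff D S).card + 2 * (S ∩ D).card = D.card + S.card := by
  have h1 : symmDiff D S = (D \ S) ∪ (S \ D) := rfl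
  have hd : Disjoint (D \ S) (S \ D) := disjoint_sdiff_sdiff
  rw [h1, Finset.card_union_of_disjoint hd]
  have := Finset.card_sdiff_add_card_inter D S
  have := Finset.card_sdiff_add_card_inter S D
  rw [Finset.inter_comm D S] at *
  omega

/-- common neighbours -/
def auxN {n : ℕ} (p : ℕ) (x y : Fin n → ZMod 2) : Finset (Fin n → ZMod 2) :=
  Finset.univ.filter fun z => hammingDist x z = p ∧ hammingDist y z = p

lemma aux_mem_N {n : ℕ} (p : ℕ) (x y z : Fin n → ZMod 2) :
    z ∈ auxN p x y ↔ hammingDist x z = p ∧ hammingDist y z = p :=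
  Finset.mem_filter.trans (by simp)

lemma aux_count {n : ℕ} (p e : ℕ) (x y : Fin n → ZMod 2) (hd : hammingDist x y = 2*e)
    (hep : e ≤ p) :
    (auxN p x y).card = (2*e).choose e * (n-2*e).choose (p-e) := by
  rw [aux_dist] at hd
  set D := auxD x y with hD
  have hc : (Dᶜ).card = n - 2*e := by rw [Finset.card_compl, hd, Fintype.card_fin]
  rw [← hc]
  conv_rhs => rw [← hd]
  rw [← Finset.card_powersetCard, ← Finset.card_powersetCard, ← Finset.card_product]
  symm
  refine Finset.card_nbij' (fun P => auxFlip x (P.1 ∪ P.2))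
    (fun z => (auxD x z ∩ D, auxD x z \ D)) ?_ ?_ ?_ ?_
  · rintro ⟨A, B⟩ hAB
    simp only [Finset.coe_product, Set.mem_prod, Finset.mem_coe, Finset.mem_powersetCard] at hAB
    obtain ⟨⟨hA, hA'⟩, hB, hB'⟩ := hAB
    have hdis : Disjoint A B := by
      rw [Finset.disjoint_left]; intro i hi hi'
      exact (Finset.mem_compl.1 (hB hi')) (hA hi)
    have hcard := Finset.card_union_of_disjoint hdis
    have hi : (A ∪ B) ∩ D = A := by
      ext i
      have := @hA i
      have := @hB i
      simp only [Finset.mem_compl, Finset.mem_inter, Finset.mem_union] at *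
      tauto
    have := aux_card_symmDiff D (A ∪ B)
    rw [hi] at this
    simp only [Finset.mem_coe, aux_mem_N, aux_dist,
      aux_D_flip, aux_D_flip', ← hD]
    omega
  · intro z hz
    simp only [Finset.mem_coe, aux_mem_N, aux_dist] at hz
    obtain ⟨h1, h2⟩ := hz
    have h3 := aux_D_flip' x y (auxD x z)
    rw [aux_flip_D, ← hD] at h3
    have h4 := aux_card_symmDiff D (auxD x z)
    rw [← h3] at h4
    have h5 := Finset.card_sdiff_add_card_inter (auxD x z) D
    simp only [Finset.coe_product, Set.mem_prod, Finset.mem_coe, Finset.mem_powersetCard]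
    refine ⟨⟨Finset.inter_subset_right, by omega⟩, ?_, by omega⟩
    intro i hi
    simp only [Finset.mem_compl, Finset.mem_sdiff] at *
    exact hi.2
  · rintro ⟨A, B⟩ hAB
    simp only [Finset.coe_product, Set.mem_prod, Finset.mem_coe, Finset.mem_powersetCard] at hAB
    obtain ⟨⟨hA, hA'⟩, hB, hB'⟩ := hAB
    simp only [aux_D_flip, Prod.mk.injEq]
    constructor
    · ext i
      have := @hA i
      have := @hB i
      simp only [Finset.mem_compl, Finset.mem_inter, Finset.mem_union] at *
      tauto
    · ext i
      have := @hA i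
      have := @hB i
      simp only [Finset.mem_compl, Finset.mem_sdiff, Finset.mem_union] at *
      tauto
  · intro z hz
    simp only
    rw [Finset.union_comm, Finset.sdiff_union_inter, aux_flip_D]

lemma aux_even {n : ℕ} (p : ℕ) (x y : Fin n → ZMod 2) (h : 0 < (auxN p x y).card) :
    ∃ e ≤ p, hammingDist x y = 2*e := by
  obtain ⟨z, hz⟩ := Finset.card_pos.1 h
  simp only [aux_mem_N, aux_dist] at hz
  have h3 := aux_D_flip' x y (auxD x z)
  rw [aux_flip_D] at h3
  have h4 := aux_card_symmDiff (auxD x y) (auxD x z)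
  rw [← h3] at h4
  have h5 := Finset.card_le_card (Finset.inter_subset_left : auxD x z ∩ auxD x y ⊆ auxD x z)
  rw [aux_dist]
  exact ⟨(auxD x z ∩ auxD x y).card, by omega, by omega⟩

lemma aux_reverse {n p : ℕ} (φ : (Fin n → ZMod 2) → Fin n → ZMod 2)
    (hbij : Function.Bijective φ)
    (hφ : ∀ x y, hammingDist x y = p → hammingDist (φ x) (φ y) = p) (x y : Fin n → ZMod 2)
    (h : hammingDist (φ x) (φ y) = p) : hammingDist x y = p := by
  let E : Finset ((Fin n → ZMod 2) × (Fin n → ZMod 2)) :=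
    Finset.univ.filter fun q => hammingDist q.1 q.2 = p
  have hinj : Function.Injective (Prod.map φ φ) := hbij.1.prodMap hbij.1
  have hsub : E.image (Prod.map φ φ) ⊆ E := by
    intro q hq
    obtain ⟨r, hr, rfl⟩ := Finset.mem_image.1 hq
    simp only [E, Finset.mem_filter, Finset.mem_univ, true_and] at hr ⊢
    exact hφ _ _ hr
  have heq := Finset.eq_of_subset_of_card_le hsub (by rw [Finset.card_image_of_injective _ hinj])
  have hm : (φ x, φ y) ∈ E := by simp [E, h]
  rw [← heq] at hm
  obtain ⟨r, hr, hr'⟩ := Finset.mem_image.1 hm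
  have : r = (x, y) := hinj hr'
  subst this
  simpa [E] using hr

lemma aux_antipode {n p : ℕ} (hn : n = 2*p+1) (hp : 0 < p) (a b : Fin n → ZMod 2)
    (h : ∀ w, hammingDist a w = p → hammingDist b w = p+1) : hammingDist a b = n := by
  set D := auxD a b with hD
  have key : ∀ S : Finset (Fin n), S.card = p → 2 * (S ∩ D).card + 1 = D.card := by
    intro S hS
    have h1 := h (auxFlip a S) (by rw [aux_dist, aux_D_flip, hS])
    rw [aux_dist, aux_D_flip', ← hD] at h1
    have := aux_card_symmDiff D S
    omega
  have huniv : D = Finset.univ := by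
    by_contra hne
    obtain ⟨j, hj⟩ : ∃ j, j ∉ D := by
      by_contra hcon
      push Not at hcon
      exact hne (Finset.eq_univ_iff_forall.2 hcon)
    obtain ⟨S0, -, hS0⟩ := Finset.exists_subset_card_eq
      (s := (Finset.univ : Finset (Fin n))) (n := p) (by simp; omega)
    have hDpos : 0 < D.card := by have := key S0 hS0; omega
    obtain ⟨i, hi⟩ := Finset.card_pos.1 hDpos
    have hij : i ≠ j := fun hh => hj (hh ▸ hi)
    obtain ⟨T, hT, hTc⟩ := Finset.exists_subset_card_eq
      (s := (Finset.univ \ {i, j} : Finset (Fin n))) (n := p-1) (by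
        rw [Finset.card_sdiff_of_subset (Finset.subset_univ _), Finset.card_pair hij]
        simp; omega)
    have hiT : i ∉ T := fun hh => by simpa using hT hh
    have hjT : j ∉ T := fun hh => by simpa using hT hh
    have k1 := key (insert i T) (by rw [Finset.card_insert_of_notMem hiT]; omega)
    have k2 := key (insert j T) (by rw [Finset.card_insert_of_notMem hjT]; omega)
    rw [Finset.insert_inter_of_mem hi, Finset.card_insert_of_notMem (by simp [hiT])] at k1
    rw [Finset.insert_inter_of_notMem hj] at k2
    omega
  rw [aux_dist, ← hD, huniv]; simp

lemma aux_compl_dist {n : ℕ} (x y z : Fin n → ZMod 2) (h : hammingDist x y = n) :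
    hammingDist x z + hammingDist y z = n := by
  have hD : auxD x y = Finset.univ := by
    rw [← Finset.card_eq_iff_eq_univ, ← aux_dist, h, Fintype.card_fin]
  have h3 := aux_D_flip' x y (auxD x z)
  rw [aux_flip_D] at h3
  have h4 := aux_card_symmDiff (auxD x y) (auxD x z)
  rw [← h3, hD, Finset.inter_univ] at h4
  simp only [Finset.card_univ, Fintype.card_fin] at h4
  rw [aux_dist, aux_dist]; omega

/-- For `n ≡ 3 (mod 4)`, `n ≥ 3`, every `(n-1)/2`-isometry of the Boolean cube `C_n` is an
`{(n-1)/2, (n+1)/2, n}`-isometry. -/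
theorem halfMinusOneIsometry_three_mod_four (n : ℕ) (hn : n % 4 = 3) (hn3 : 3 ≤ n)
    (φ : (Fin n → ZMod 2) → Fin n → ZMod 2) (hbij : Function.Bijective φ)
    (hφ : ∀ x y, hammingDist x y = (n - 1) / 2 →
      hammingDist (φ x) (φ y) = (n - 1) / 2) :
    ∀ x y, (hammingDist x y = (n - 1) / 2 ∨ hammingDist x y = (n + 1) / 2 ∨
        hammingDist x y = n) →
      hammingDist (φ x) (φ y) = hammingDist x y := by
  obtain ⟨k, hk⟩ : ∃ k, n = 2*(2*k+1)+1 := ⟨n/4, by omega⟩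
  rw [show (n-1)/2 = 2*k+1 by omega] at *
  rw [show (n+1)/2 = 2*(k+1) by omega]
  have hrev := aux_reverse φ hbij hφ
  have hmid : ∀ x y, hammingDist x y = 2*(k+1) → hammingDist (φ x) (φ y) = 2*(k+1) := by
    intro x y hxy
    have hc := aux_count (2*k+1) (k+1) x y hxy (by omega)
    have himg : (auxN (2*k+1) (φ x) (φ y)) = (auxN (2*k+1) x y).image φ := by
      ext z
      simp only [aux_mem_N, Finset.mem_image]
      constructor
      · rintro ⟨h1, h2⟩
        obtain ⟨w, rfl⟩ := hbij.2 z
        exact ⟨w, ⟨hrev _ _ h1, hrev _ _ h2⟩, rfl⟩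
      · rintro ⟨w, ⟨h1, h2⟩, rfl⟩
        exact ⟨hφ _ _ h1, hφ _ _ h2⟩
    have hcard : (auxN (2*k+1) (φ x) (φ y)).card = (auxN (2*k+1) x y).card := by
      rw [himg, Finset.card_image_of_injective _ hbij.1]
    have hpos : 0 < (auxN (2*k+1) (φ x) (φ y)).card := by
      rw [hcard, hc]
      exact Nat.mul_pos (Nat.choose_pos (by omega)) (Nat.choose_pos (by omega))
    obtain ⟨e, he, hde⟩ := aux_even _ _ _ hpos
    have hc' := aux_count (2*k+1) e _ _ hde he
    rw [hcard, hc, hk] at hc'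
    have := aux_f_inj k e he hc'.symm
    rw [hde, this]
  rintro x y (h | h | h)
  · rw [h]; exact hφ x y h
  · rw [h]; exact hmid x y h
  · rw [h]
    refine aux_antipode hk (by omega) _ _ ?_
    intro w hw
    obtain ⟨z, rfl⟩ := hbij.2 w
    have h1 := hrev _ _ hw
    have h2 := aux_compl_dist x y z h
    exact hmid y z (by omega)
end

section
/- Suppose n ≡ 1 (mod 4) and n ≥ 5. Then every (n−1)/2-isometry of C_n is an even isometry. -/
theorem hd_decomp {n : ℕ} (x y z : Fin n → ZMod 2) :
    hammingDist x y = (Finset.univ.filter fun t => x t ≠ y t ∧ x t ≠ z t).card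
        + (Finset.univ.filter fun t => x t ≠ y t ∧ x t = z t).card ∧
    hammingDist x z = (Finset.univ.filter fun t => x t ≠ y t ∧ x t ≠ z t).card
        + (Finset.univ.filter fun t => x t = y t ∧ x t ≠ z t).card ∧
    hammingDist y z = (Finset.univ.filter fun t => x t ≠ y t ∧ x t = z t).card
        + (Finset.univ.filter fun t => x t = y t ∧ x t ≠ z t).card := by
  have key : ∀ a b c : ZMod 2, a ≠ b → a ≠ c → b = c := by decide
  refine ⟨?_, ?_, ?_⟩
  all_goals
    unfold hammingDist
    rw [← Finset.card_union_of_disjoint]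
    · congr 1
      ext t
      have := key (x t) (y t) (z t)
      simp only [Finset.mem_filter, Finset.mem_union, Finset.mem_univ, true_and]
      grind
    · rw [Finset.disjoint_left]
      intro t
      simp only [Finset.mem_filter, Finset.mem_univ, true_and]
      grind

theorem count_lemma {n : ℕ} (x y : Fin n → ZMod 2) (i l b : ℕ)
    (h : hammingDist x y = i + l) :
    (Finset.univ.filter fun z => hammingDist x z = i + b ∧ hammingDist y z = l + b).card
      = (i + l).choose i * (n - (i + l)).choose b := by
  have hD : (Finset.univ.filter fun t => x t ≠ y t).card = i + l := h
  have hDc : (Finset.univ.filter fun t => x t = y t).card = n - (i + l) := by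
    have := Finset.card_filter_add_card_filter_not (s := Finset.univ) (fun t => x t ≠ y t)
    simp only [ne_eq, not_not, Finset.card_univ, Fintype.card_fin] at this
    simp only [ne_eq] at hD
    omega
  rw [← hDc]
  conv_rhs => rw [← hD]
  rw [← Finset.card_powersetCard, ← Finset.card_powersetCard, ← Finset.card_product]
  have key : ∀ a b : ZMod 2, a ≠ b → a + 1 = b := by decide
  have key2 : ∀ a : ZMod 2, a ≠ a + 1 := by decide
  refine Finset.card_nbij'
    (fun z => (Finset.univ.filter fun t => x t ≠ y t ∧ x t ≠ z t,
      Finset.univ.filter fun t => x t = y t ∧ x t ≠ z t))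
    (fun P t => if t ∈ P.1 ∪ P.2 then x t + 1 else x t) ?_ ?_ ?_ ?_
  · intro z hz
    simp only [Finset.coe_filter, Finset.mem_univ, true_and, Set.mem_setOf_eq] at hz
    obtain ⟨h1, h2, h3⟩ := hd_decomp x y z
    simp only [Finset.coe_product, Set.mem_prod, Finset.mem_coe, Finset.mem_powersetCard]
    refine ⟨⟨?_, by omega⟩, ⟨?_, by omega⟩⟩
    · intro t; simp only [Finset.mem_filter]; tauto
    · intro t; simp only [Finset.mem_filter]; tauto
  · rintro ⟨P, Q⟩ hPQ
    simp only [Finset.coe_product, Set.mem_prod, Finset.mem_coe, Finset.mem_powersetCard] at hPQ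
    obtain ⟨⟨hP, hPc⟩, hQ, hQc⟩ := hPQ
    obtain ⟨h1, h2, h3⟩ := hd_decomp x y (fun t => if t ∈ P ∪ Q then x t + 1 else x t)
    have e1 : (Finset.univ.filter fun t => x t ≠ y t ∧
        x t ≠ (if t ∈ P ∪ Q then x t + 1 else x t)) = P := by
      ext t
      have a1 := @hP t
      have a2 := @hQ t
      have a3 := key2 (x t)
      simp only [Finset.mem_filter, Finset.mem_union, Finset.mem_univ, true_and] at *
      grind
    have e2 : (Finset.univ.filter fun t => x t = y t ∧
        x t ≠ (if t ∈ P ∪ Q then x t + 1 else x t)) = Q := by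
      ext t
      have a1 := @hP t
      have a2 := @hQ t
      have a3 := key2 (x t)
      simp only [Finset.mem_filter, Finset.mem_union, Finset.mem_univ, true_and] at *
      grind
    rw [e1] at h1 h2
    rw [e2] at h2 h3
    simp only [Finset.coe_filter, Finset.mem_univ, true_and, Set.mem_setOf_eq]
    omega
  · intro z _
    funext t
    have a3 := key (x t) (z t)
    simp only [Finset.mem_filter, Finset.mem_union, Finset.mem_univ, true_and]
    grind
  · rintro ⟨P, Q⟩ hPQ
    simp only [Finset.coe_product, Set.mem_prod, Finset.mem_coe, Finset.mem_powersetCard] at hPQ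
    obtain ⟨⟨hP, hPc⟩, hQ, hQc⟩ := hPQ
    refine Prod.ext ?_ ?_
    all_goals
      ext t
      have a1 := @hP t
      have a2 := @hQ t
      have a3 := key2 (x t)
      simp only [Finset.mem_filter, Finset.mem_union, Finset.mem_univ, true_and] at *
      grind

theorem cb_step (a b : ℕ) (h : a < b) :
    (a + 1).centralBinom * b.centralBinom < a.centralBinom * (b + 1).centralBinom := by
  have h1 := Nat.succ_mul_centralBinom_succ a
  have h2 := Nat.succ_mul_centralBinom_succ b
  have pa := Nat.centralBinom_pos a
  have pb := Nat.centralBinom_pos b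
  have hp : 0 < (a + 1) * (b + 1) := by positivity
  refine lt_of_mul_lt_mul_left (a := (a + 1) * (b + 1)) ?_ hp.le
  calc (a + 1) * (b + 1) * ((a + 1).centralBinom * b.centralBinom)
      = (b + 1) * ((a + 1) * (a + 1).centralBinom) * b.centralBinom := by ring
    _ = (2 * (2 * a + 1) * (b + 1)) * (a.centralBinom * b.centralBinom) := by rw [h1]; ring
    _ < (2 * (2 * b + 1) * (a + 1)) * (a.centralBinom * b.centralBinom) := by
        apply Nat.mul_lt_mul_of_pos_right _ (by positivity)
        nlinarith
    _ = (a + 1) * a.centralBinom * ((b + 1) * (b + 1).centralBinom) := by rw [h2]; ring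
    _ = _ := by ring

theorem cb_mid (k t : ℕ) (ht : t + 1 ≤ k) :
    k.centralBinom * (k + 1).centralBinom
      < (k - (t + 1)).centralBinom * (k + 1 + (t + 1)).centralBinom := by
  induction t with
  | zero =>
    obtain ⟨a, rfl⟩ : ∃ a, k = a + 1 := ⟨k - 1, by omega⟩
    exact cb_step a (a + 1 + 1) (by omega)
  | succ t ih =>
    refine (ih (by omega)).trans ?_
    have := cb_step (k - (t + 1 + 1)) (k + 1 + (t + 1)) (by omega)
    rwa [show k - (t + 1 + 1) + 1 = k - (t + 1) by omega] at this

theorem choose_half (m : ℕ) : 2 * (2 * m + 1).choose m = (m + 1).centralBinom := by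
  rw [Nat.centralBinom, show 2 * (m + 1) = 2 * m + 1 + 1 by ring, Nat.choose_succ_succ,
    Nat.choose_symm_half]
  ring

theorem f_eq (k j : ℕ) (hj : j ≤ 2 * k) :
    2 * ((j + j).choose j * (4 * k + 1 - (j + j)).choose (2 * k - j))
      = j.centralBinom * (2 * k + 1 - j).centralBinom := by
  obtain ⟨m, hm⟩ : ∃ m, 2 * k = j + m := ⟨2 * k - j, by omega⟩
  rw [show 4 * k + 1 - (j + j) = 2 * m + 1 by omega, show 2 * k - j = m by omega,
    show 2 * k + 1 - j = m + 1 by omega, ← choose_half, Nat.centralBinom, two_mul j]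
  ring

theorem f_inj (k j : ℕ) (hj : j ≤ 2 * k)  (hj1 : 1 ≤ j)
    (h : (j + j).choose j * (4 * k + 1 - (j + j)).choose (2 * k - j)
      = (k + k).choose k * (4 * k + 1 - (k + k)).choose (2 * k - k)) : j = k ∨ j = k + 1 := by
  have h1 := f_eq k j hj
  have h2 := f_eq k k (by omega)
  rw [h, h2, show 2 * k + 1 - k = k + 1 by omega] at h1
  by_contra hc
  rcases lt_or_ge j k with hlt | hge
  · have := cb_mid k (k - j - 1) (by omega)
    rw [show k - (k - j - 1 + 1) = j by omega,
      show k + 1 + (k - j - 1 + 1) = 2 * k + 1 - j by omega] at this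
    omega
  · have := cb_mid k (j - k - 2) (by omega)
    rw [show k - (j - k - 2 + 1) = 2 * k + 1 - j by omega,
      show k + 1 + (j - k - 2 + 1) = j by omega, mul_comm (Nat.centralBinom (2 * k + 1 - j))] at this
    omega

theorem f_mid (k : ℕ) (hk : 1 ≤ k) :
    ((k + 1) + (k + 1)).choose (k + 1) * (4 * k + 1 - ((k + 1) + (k + 1))).choose (2 * k - (k + 1))
      = (k + k).choose k * (4 * k + 1 - (k + k)).choose (2 * k - k) := by
  have h1 := f_eq k (k + 1) (by omega)
  have h2 := f_eq k k (by omega)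
  rw [show 2 * k + 1 - (k + 1) = k by omega, mul_comm (Nat.centralBinom _)] at h1
  rw [show 2 * k + 1 - k = k + 1 by omega] at h2
  omega

theorem g_eq (k j : ℕ) (hj : j ≤ 2 * k) (hj1 : 1 ≤ j) :
    (j + 1) * (((j - 1) + (j + 1)).choose (j - 1)
        * (4 * k + 1 - ((j - 1) + (j + 1))).choose (2 * k + 1 - j))
      = j * ((j + j).choose j * (4 * k + 1 - (j + j)).choose (2 * k - j)) := by
  obtain ⟨m, hm⟩ : ∃ m, 2 * k = j + m := ⟨2 * k - j, by omega⟩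
  obtain ⟨i, rfl⟩ : ∃ i, j = i + 1 := ⟨j - 1, by omega⟩
  have e1 : i + 1 - 1 + (i + 1 + 1) = i + 1 + (i + 1) := by omega
  rw [e1, show 4 * k + 1 - (i + 1 + (i + 1)) = 2 * m + 1 by omega,
    show 2 * k - (i + 1) = m by omega,
    show 2 * k + 1 - (i + 1) = m + 1 by omega, Nat.choose_symm_half, Nat.add_sub_cancel]
  have := Nat.choose_succ_right_eq (i + 1 + (i + 1)) i
  rw [show i + 1 + (i + 1) - i = i + 1 + 1 by omega] at this
  calc _ = ((i + 1 + (i + 1)).choose i * (i + 1 + 1)) * (2 * m + 1).choose m := by ring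
    _ = _ := by rw [← this]; ring

/-- a bijection with the p-isometry property reflects distance p. -/
theorem iso_iff {n p : ℕ} (φ : (Fin n → ZMod 2) → Fin n → ZMod 2) (hbij : Function.Bijective φ)
    (hφ : ∀ x y, hammingDist x y = p → hammingDist (φ x) (φ y) = p) (x y) :
    hammingDist (φ x) (φ y) = p ↔ hammingDist x y = p := by
  refine ⟨fun h => ?_, hφ x y⟩
  let S : Finset ((Fin n → ZMod 2) × (Fin n → ZMod 2)) :=
    Finset.univ.filter fun q => hammingDist q.1 q.2 = p
  have hinj : Function.Injective (Prod.map φ φ) := hbij.1.prodMap hbij.1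
  have hS : S.image (Prod.map φ φ) = S := by
    apply Finset.eq_of_subset_of_card_le
    · intro q hq
      obtain ⟨r, hr, rfl⟩ := Finset.mem_image.1 hq
      simp only [S, Finset.mem_filter, Finset.mem_univ, true_and] at hr ⊢
      exact hφ _ _ hr
    · rw [Finset.card_image_of_injective _ hinj]
  have hm : Prod.map φ φ (x, y) ∈ S.image (Prod.map φ φ) := by
    rw [hS]; simpa [S] using h
  obtain ⟨r, hr, hre⟩ := Finset.mem_image.1 hm
  rw [hinj hre] at hr
  simpa [S] using hr

theorem count_inv {n p q : ℕ} (φ : (Fin n → ZMod 2) → Fin n → ZMod 2)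
    (hbij : Function.Bijective φ)
    (hp : ∀ x y, hammingDist (φ x) (φ y) = p ↔ hammingDist x y = p)
    (hq : ∀ x y, hammingDist (φ x) (φ y) = q ↔ hammingDist x y = q) (x y) :
    (Finset.univ.filter fun z => hammingDist (φ x) z = p ∧ hammingDist (φ y) z = q).card
    = (Finset.univ.filter fun z => hammingDist x z = p ∧ hammingDist y z = q).card := by
  symm
  apply Finset.card_equiv (Equiv.ofBijective φ hbij)
  intro z
  simp [hp, hq]

theorem main_k (k : ℕ) (hk : 1 ≤ k)
    (φ : (Fin (4 * k + 1) → ZMod 2) → Fin (4 * k + 1) → ZMod 2) (hbij : Function.Bijective φ)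
    (hφ : ∀ x y, hammingDist x y = 2 * k → hammingDist (φ x) (φ y) = 2 * k) :
    ∀ x y, Even (hammingDist x y) → hammingDist (φ x) (φ y) = hammingDist x y := by
  have hp := iso_iff φ hbij hφ
  have cnt : ∀ (x y : Fin (4 * k + 1) → ZMod 2) (j : ℕ), hammingDist x y = j + j →
      (Finset.univ.filter fun z => hammingDist x z = 2 * k ∧ hammingDist y z = 2 * k).card
        = (j + j).choose j * (4 * k + 1 - (j + j)).choose (2 * k - j) ∧ j ≤ 2 * k := by
    intro x y j h
    have hle : hammingDist x y ≤ 4 * k + 1 := by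
      simpa using hammingDist_le_card_fintype (x := x) (y := y)
    have := count_lemma x y j j (2 * k - j) h
    rw [show j + (2 * k - j) = 2 * k by omega] at this
    exact ⟨this, by omega⟩
  -- even distances go to even distances with the same count
  have ev : ∀ (x y : Fin (4 * k + 1) → ZMod 2) (j : ℕ), hammingDist x y = j + j → 1 ≤ j →
      ∃ j', hammingDist (φ x) (φ y) = j' + j' ∧ 1 ≤ j' ∧ j' ≤ 2 * k ∧
        (j' + j').choose j' * (4 * k + 1 - (j' + j')).choose (2 * k - j')
        = (j + j).choose j * (4 * k + 1 - (j + j)).choose (2 * k - j) := by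
    intro x y j h hj
    obtain ⟨c, hle⟩ := cnt x y j h
    have pos : 0 < (j + j).choose j * (4 * k + 1 - (j + j)).choose (2 * k - j) :=
      Nat.mul_pos (Nat.choose_pos (by omega)) (Nat.choose_pos (by omega))
    rw [← c, Finset.card_pos] at pos
    obtain ⟨z, hz⟩ := pos
    simp only [Finset.mem_filter, Finset.mem_univ, true_and] at hz
    have h1 := hφ _ _ hz.1
    have h2 := hφ _ _ hz.2
    have hd := hd_decomp (φ x) (φ y) (φ z)
    obtain ⟨j', hj'⟩ : ∃ j', hammingDist (φ x) (φ y) = j' + j' := 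
      ⟨hammingDist (φ x) (φ y) / 2, by omega⟩
    have hne : hammingDist (φ x) (φ y) ≠ 0 := by
      rw [hammingDist_ne_zero]
      intro he
      rw [hbij.1 he, hammingDist_self] at h
      omega
    obtain ⟨c', hle'⟩ := cnt _ _ j' hj'
    refine ⟨j', hj', by omega, hle', ?_⟩
    rw [← c, ← c']
    exact count_inv φ hbij hp hp x y
  have hq0 : ∀ x y, hammingDist x y = 2 * k + 2 → hammingDist (φ x) (φ y) = 2 * k + 2 := by
    intro x y h
    obtain ⟨j', h1, h2, h3, h4⟩ := ev x y (k + 1) (by omega) (by omega)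
    rw [f_mid k hk] at h4
    have hne := hp x y
    rcases f_inj k j' h3 h2 h4 with e | e <;> omega
  have hq := iso_iff φ hbij hq0
  intro x y hev
  obtain ⟨j, hj⟩ := hev
  rcases Nat.eq_zero_or_pos j with h0 | hj1
  · subst h0
    have : x = y := hammingDist_eq_zero.1 hj
    subst this
    simp
  obtain ⟨j', h1, h2, h3, h4⟩ := ev x y j hj hj1
  obtain ⟨c, hle⟩ := cnt x y j hj
  have hg := count_inv φ hbij hp hq x y
  have g1 := count_lemma (φ x) (φ y) (j' - 1) (j' + 1) (2 * k + 1 - j') (by omega)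
  have g2 := count_lemma x y (j - 1) (j + 1) (2 * k + 1 - j) (by omega)
  rw [show j' - 1 + (2 * k + 1 - j') = 2 * k by omega,
    show j' + 1 + (2 * k + 1 - j') = 2 * k + 2 by omega] at g1
  rw [show j - 1 + (2 * k + 1 - j) = 2 * k by omega,
    show j + 1 + (2 * k + 1 - j) = 2 * k + 2 by omega] at g2
  have q1 := g_eq k j' h3 h2
  have q2 := g_eq k j hle hj1
  rw [← g1, hg, h4] at q1
  rw [← g2] at q2
  have pos : 0 < (j + j).choose j * (4 * k + 1 - (j + j)).choose (2 * k - j) :=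
      Nat.mul_pos (Nat.choose_pos (by omega)) (Nat.choose_pos (by omega))
  generalize (j + j).choose j * (4 * k + 1 - (j + j)).choose (2 * k - j) = F at *
  generalize (Finset.univ.filter fun z =>
    hammingDist x z = 2 * k ∧ hammingDist y z = 2 * k + 2).card = G at *
  have hGF : G < F := by nlinarith
  have : j' = j := by
    have e : j' * (F - G) = j * (F - G) := by
      zify [hGF.le]
      zify at q1 q2
      linarith
    exact Nat.eq_of_mul_eq_mul_right (by omega) e
  omega

/-- For `n ≡ 1 (mod 4)`, `n ≥ 5`, every `(n-1)/2`-isometry of the Boolean cube `C_n` is an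
even isometry. -/
theorem halfMinusOneIsometry_one_mod_four (n : ℕ) (hn : n % 4 = 1) (hn5 : 5 ≤ n)
    (φ : (Fin n → ZMod 2) → Fin n → ZMod 2) (hbij : Function.Bijective φ)
    (hφ : ∀ x y, hammingDist x y = (n - 1) / 2 →
      hammingDist (φ x) (φ y) = (n - 1) / 2) :
    ∀ x y, Even (hammingDist x y) → hammingDist (φ x) (φ y) = hammingDist x y := by
  obtain ⟨k, rfl⟩ : ∃ k, n = 4 * k + 1 := ⟨n / 4, by omega⟩
  rw [show (4 * k + 1 - 1) / 2 = 2 * k by omega] at hφ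
  exact main_k k (by omega) φ hbij hφ
end

section
/- Suppose n ≡ 1 (mod 4). Then every {(n−1)/2, (n+1)/2, n}-isometry of C_n fixing 0̄ is an isometry. -/
namespace TripleIso

abbrev Q (n : ℕ) := Fin n → ZMod 2

lemma dist_sum {n : ℕ} (x y : Q n) :
    hammingDist x y = ∑ i, (if x i ≠ y i then 1 else 0) := by
  simp [hammingDist, Finset.card_filter]

lemma le_n {n : ℕ} (x y : Q n) : hammingDist x y ≤ n := by
  simpa using hammingDist_le_card_fintype (x := x) (y := y)

lemma perimeter {n : ℕ} (a b c : Q n) :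
    hammingDist a b + hammingDist b c + hammingDist a c ≤ 2 * n := by
  rw [dist_sum, dist_sum, dist_sum, ← Finset.sum_add_distrib, ← Finset.sum_add_distrib]
  have key : ∀ u v w : ZMod 2, (if u ≠ v then 1 else 0) + (if v ≠ w then 1 else 0)
      + (if u ≠ w then 1 else 0) ≤ 2 := by decide
  calc _ ≤ ∑ _i : Fin n, 2 := Finset.sum_le_sum (fun i _ => key (a i) (b i) (c i))
    _ = 2 * n := by simp [mul_comm]

/-- antipodal points -/
lemma antipode {n : ℕ} (x y y' : Q n) (h : hammingDist y y' = n) :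
    hammingDist x y + hammingDist x y' = n := by
  have h1 := perimeter x y y'
  have h2 := hammingDist_triangle y x y'
  rw [hammingDist_comm y x] at h2
  omega

lemma exists_antipode {n : ℕ} (y : Q n) : ∃ y' : Q n, hammingDist y y' = n := by
  refine ⟨fun i => y i + 1, ?_⟩
  simp [hammingDist]

/-- flip the coordinates in `D` -/
def flip {n : ℕ} (x : Q n) (D : Finset (Fin n)) : Q n := fun i => if i ∈ D then x i + 1 else x i

lemma ne_flip {n : ℕ} (x : Q n) (D : Finset (Fin n)) (i : Fin n) :
    x i ≠ flip x D i ↔ i ∈ D := by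
  unfold flip
  split_ifs with h <;> simp [h]

lemma dist_flip {n : ℕ} (x : Q n) (D : Finset (Fin n)) : hammingDist x (flip x D) = D.card := by
  unfold hammingDist
  congr 1
  ext i
  simp only [Finset.mem_filter, Finset.mem_univ, true_and, ne_flip]

lemma flip_filter {n : ℕ} (x z : Q n) : flip x (Finset.univ.filter (fun i => x i ≠ z i)) = z := by
  funext i
  have key : ∀ u v : ZMod 2, (if u ≠ v then u + 1 else u) = v := by decide
  simpa [flip] using key (x i) (z i)

lemma dist_step {n : ℕ} (x z : Q n) (h : hammingDist x z + 2 ≤ n) :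
    ∃ y : Q n, hammingDist x y = hammingDist x z + 2 ∧ hammingDist y z = 2 := by
  classical
  set D := Finset.univ.filter (fun i => x i = z i) with hD
  have hc : D.card + hammingDist x z = n := by
    have := Finset.card_filter_add_card_filter_not (s := (Finset.univ : Finset (Fin n)))
      (fun i => x i = z i)
    simpa [hammingDist, hD] using this
  obtain ⟨E, hE, hE2⟩ := Finset.exists_subset_card_eq (show 2 ≤ D.card by omega)
  have h2 : hammingDist z (flip z E) = 2 := by rw [dist_flip, hE2]
  refine ⟨flip z E, ?_, by rw [hammingDist_comm, h2]⟩
  refine Eq.trans ?_ (congrArg (hammingDist x z + ·) h2)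
  rw [dist_sum, dist_sum, dist_sum, ← Finset.sum_add_distrib]
  refine Finset.sum_congr rfl fun i _ => ?_
  by_cases hi : i ∈ E
  · have : x i = z i := by simpa [hD] using hE hi
    simp [this]
  · simp [flip, hi]

def N {n : ℕ} (m : ℕ) (x y : Q n) : ℕ :=
  (Finset.univ.filter (fun z : Q n => hammingDist x z = m ∧ hammingDist y z = m)).card

lemma split {n : ℕ} (x y z : Q n) :
    hammingDist x z = (Finset.univ.filter (fun i => x i ≠ y i ∧ x i ≠ z i)).card
      + (Finset.univ.filter (fun i => x i = y i ∧ x i ≠ z i)).card ∧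
    hammingDist y z + (Finset.univ.filter (fun i => x i ≠ y i ∧ x i ≠ z i)).card
      = hammingDist x y + (Finset.univ.filter (fun i => x i = y i ∧ x i ≠ z i)).card := by
  rw [dist_sum, dist_sum, dist_sum, Finset.card_filter, Finset.card_filter,
    ← Finset.sum_add_distrib, ← Finset.sum_add_distrib, ← Finset.sum_add_distrib]
  constructor
  · refine Finset.sum_congr rfl fun i _ => ?_
    generalize x i = a
    generalize y i = b
    generalize z i = c
    revert a b c; decide
  · refine Finset.sum_congr rfl fun i _ => ?_
    generalize x i = a
    generalize y i = b
    generalize z i = c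
    revert a b c; decide

lemma N_odd {n m : ℕ} (x y : Q n) (h : N m x y ≠ 0) : ∃ j, hammingDist x y = 2 * j := by
  obtain ⟨z, hz⟩ := Finset.card_pos.1 (Nat.pos_of_ne_zero h)
  simp only [Finset.mem_filter, Finset.mem_univ, true_and] at hz
  have := split x y z
  exact ⟨(Finset.univ.filter (fun i => x i ≠ y i ∧ x i ≠ z i)).card, by omega⟩

lemma N_even {n m j : ℕ} (hj : j ≤ m) (x y : Q n) (h : hammingDist x y = 2 * j) :
    N m x y = (2 * j).choose j * (n - 2 * j).choose (m - j) := by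
  classical
  set Y := Finset.univ.filter (fun i => x i ≠ y i) with hY
  have hYc : Y.card = 2 * j := h
  have : N m x y = (Finset.powersetCard j Y ×ˢ Finset.powersetCard (m - j) Yᶜ).card := by
    unfold N
    refine Finset.card_bij'
      (fun z _ => (Finset.univ.filter (fun i => x i ≠ y i ∧ x i ≠ z i),
        Finset.univ.filter (fun i => x i = y i ∧ x i ≠ z i)))
      (fun p _ => flip x (p.1 ∪ p.2)) ?_ ?_ ?_ ?_
    · intro z hz
      simp only [Finset.mem_filter, Finset.mem_univ, true_and] at hz
      have := split x y z
      simp only [Finset.mem_product, Finset.mem_powersetCard]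
      refine ⟨⟨?_, by omega⟩, ⟨?_, by omega⟩⟩
      · intro i; simp [hY]; tauto
      · intro i; simp [hY]; tauto
    · rintro ⟨A, B⟩ hp
      simp only [Finset.mem_product, Finset.mem_powersetCard] at hp
      obtain ⟨⟨hA, hA'⟩, ⟨hB, hB'⟩⟩ := hp
      have hs := split x y (flip x (A ∪ B))
      have e1 : Finset.univ.filter (fun i => x i ≠ y i ∧ x i ≠ flip x (A ∪ B) i) = A := by
        ext i
        have a1 : i ∈ A → x i ≠ y i := fun hi => by simpa [hY] using hA hi
        have a2 : i ∈ B → x i = y i := fun hi => by simpa [hY] using hB hi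
        simp only [Finset.mem_filter, Finset.mem_univ, true_and, ne_flip, Finset.mem_union]
        tauto
      have e2 : Finset.univ.filter (fun i => x i = y i ∧ x i ≠ flip x (A ∪ B) i) = B := by
        ext i
        have a1 : i ∈ A → x i ≠ y i := fun hi => by simpa [hY] using hA hi
        have a2 : i ∈ B → x i = y i := fun hi => by simpa [hY] using hB hi
        simp only [Finset.mem_filter, Finset.mem_univ, true_and, ne_flip, Finset.mem_union]
        tauto
      rw [e1, e2] at hs
      simp only [Finset.mem_filter, Finset.mem_univ, true_and]
      omega
    · intro z hz
      dsimp only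
      rw [← Finset.filter_or]
      conv_rhs => rw [← flip_filter x z]
      congr 1
      ext i
      simp only [Finset.mem_filter, Finset.mem_univ, true_and]
      tauto
    · rintro ⟨A, B⟩ hp
      simp only [Finset.mem_product, Finset.mem_powersetCard] at hp
      obtain ⟨⟨hA, hA'⟩, ⟨hB, hB'⟩⟩ := hp
      ext i
      · have a1 : i ∈ A → x i ≠ y i := fun hi => by simpa [hY] using hA hi
        have a2 : i ∈ B → x i = y i := fun hi => by simpa [hY] using hB hi
        simp only [Finset.mem_filter, Finset.mem_univ, true_and, ne_flip, Finset.mem_union]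
        tauto
      · have a1 : i ∈ A → x i ≠ y i := fun hi => by simpa [hY] using hA hi
        have a2 : i ∈ B → x i = y i := fun hi => by simpa [hY] using hB hi
        simp only [Finset.mem_filter, Finset.mem_univ, true_and, ne_flip, Finset.mem_union]
        tauto
  rw [this, Finset.card_product, Finset.card_powersetCard, Finset.card_powersetCard,
    Finset.card_compl, hYc, Fintype.card_fin]

lemma N_central {k j : ℕ} (x y : Q (4 * k + 1)) (h : hammingDist x y = 2 * j) :
    2 * N (2 * k) x y = j.centralBinom * (2 * k + 1 - j).centralBinom := by
  have hle := le_n x y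
  obtain ⟨m, hm⟩ : ∃ m, 2 * k = j + m := ⟨2 * k - j, by omega⟩
  rw [N_even (by omega) x y h, show 4 * k + 1 - 2 * j = 2 * m + 1 by omega,
    show 2 * k - j = m by omega, show 2 * k + 1 - j = m + 1 by omega,
    Nat.centralBinom_eq_two_mul_choose, Nat.centralBinom_eq_two_mul_choose,
    show 2 * (m + 1) = (2 * m + 1) + 1 by ring, Nat.choose_succ_succ (2 * m + 1) m,
    ← Nat.choose_symm_half m]
  ring

lemma cb_step (a b : ℕ) (h : a < b) :
    (a + 1).centralBinom * b.centralBinom < a.centralBinom * (b + 1).centralBinom := by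
  have h1 := Nat.succ_mul_centralBinom_succ a
  have h2 := Nat.succ_mul_centralBinom_succ b
  have pa := Nat.centralBinom_pos a
  have pb := Nat.centralBinom_pos b
  have pp := Nat.mul_pos pa pb
  refine lt_of_mul_lt_mul_left (a := (a + 1) * (b + 1)) ?_ (Nat.zero_le _)
  calc (a + 1) * (b + 1) * ((a + 1).centralBinom * b.centralBinom)
      = (b + 1) * (2 * (2 * a + 1)) * (a.centralBinom * b.centralBinom) := by
        linear_combination (b + 1) * b.centralBinom * h1
    _ < (a + 1) * (2 * (2 * b + 1)) * (a.centralBinom * b.centralBinom) := by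
        refine Nat.mul_lt_mul_of_pos_right ?_ pp
        nlinarith
    _ = (a + 1) * (b + 1) * (a.centralBinom * (b + 1).centralBinom) := by
        have := congrArg (fun t => (a + 1) * a.centralBinom * t) h2
        linarith

lemma cb_lt (d : ℕ) : ∀ a b : ℕ, a + 2 * d < b →
    (a + d + 1).centralBinom * (b - d).centralBinom < a.centralBinom * (b + 1).centralBinom := by
  induction d with
  | zero => intro a b h; simpa using cb_step a b (by omega)
  | succ d ih =>
    intro a b h
    obtain ⟨c, rfl⟩ : ∃ c, b = c + 1 + d := ⟨b - d - 1, by omega⟩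
    have h1 := ih a (c + 1 + d) (by omega)
    have h2 := cb_step (a + d + 1) c (by omega)
    rw [show c + 1 + d - d = c + 1 by omega] at h1
    rw [show c + 1 + d - (d + 1) = c by omega, show a + (d + 1) + 1 = a + d + 1 + 1 by ring]
    exact h2.trans h1

/-- strict monotonicity of products of central binomials at constant sum -/
lemma cb_lt' {a b c e : ℕ} (hs : a + b = c + e) (h1 : a < c) (h2 : c ≤ e) :
    c.centralBinom * e.centralBinom < a.centralBinom * b.centralBinom := by
  have := cb_lt (c - a - 1) a (b - 1) (by omega)
  rwa [show a + (c - a - 1) + 1 = c by omega, show b - 1 - (c - a - 1) = e by omega,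
    show b - 1 + 1 = b by omega] at this

lemma cb_inj {a b c e : ℕ} (hs : a + b = c + e)
    (h : a.centralBinom * b.centralBinom = c.centralBinom * e.centralBinom) :
    a = c ∨ a = e := by
  by_contra hne
  push Not at hne
  rcases le_total a b with hab | hab <;> rcases le_total c e with hce | hce
  · rcases lt_or_ge a c with q | q
    · have := cb_lt' hs q hce; omega
    · have := cb_lt' hs.symm (show c < a by omega) hab; omega
  · rcases lt_or_ge a e with q | q
    · have := cb_lt' (show a + b = e + c by omega) q hce; rw [mul_comm] at this; omega
    · have := cb_lt' (show e + c = a + b by omega) (show e < a by omega) hab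
      rw [mul_comm e.centralBinom] at this; omega
  · rcases lt_or_ge b c with q | q
    · have := cb_lt' (show b + a = c + e by omega) q hce; rw [mul_comm b.centralBinom] at this; omega
    · have := cb_lt' (show c + e = b + a by omega) (show c < b by omega) hab
      rw [mul_comm b.centralBinom] at this; omega
  · rcases lt_or_ge b e with q | q
    · have := cb_lt' (show b + a = e + c by omega) q hce
      rw [mul_comm b.centralBinom, mul_comm e.centralBinom] at this; omega
    · have := cb_lt' (show e + c = b + a by omega) (show e < b by omega) hab
      rw [mul_comm b.centralBinom, mul_comm e.centralBinom] at this; omega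

lemma dist_iff {n D : ℕ} (φ : Q n → Q n) (hbij : Function.Bijective φ)
    (h : ∀ x y, hammingDist x y = D → hammingDist (φ x) (φ y) = D) (x y : Q n) :
    hammingDist (φ x) (φ y) = D ↔ hammingDist x y = D := by
  classical
  refine ⟨fun hxy => ?_, h x y⟩
  let E : Finset (Q n × Q n) := Finset.univ.filter (fun p => hammingDist p.1 p.2 = D)
  have hinj : Function.Injective (Prod.map φ φ) := hbij.1.prodMap hbij.1
  have hsub : E.image (Prod.map φ φ) ⊆ E := by
    intro p hp
    obtain ⟨q, hq, rfl⟩ := Finset.mem_image.1 hp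
    simp only [E, Finset.mem_filter, Finset.mem_univ, true_and] at hq ⊢
    exact h _ _ hq
  have heq := Finset.eq_of_subset_of_card_le hsub (Finset.card_image_of_injective E hinj).ge
  have hm : (φ x, φ y) ∈ E := by simpa [E] using hxy
  rw [← heq] at hm
  obtain ⟨q, hq, hqe⟩ := Finset.mem_image.1 hm
  have : q = (x, y) := hinj hqe
  subst this
  simpa [E] using hq

lemma N_map {n D : ℕ} (φ : Q n → Q n) (hbij : Function.Bijective φ)
    (h : ∀ x y, hammingDist (φ x) (φ y) = D ↔ hammingDist x y = D) (x y : Q n) :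
    N D (φ x) (φ y) = N D x y := by
  symm
  unfold N
  refine Finset.card_bijective φ hbij ?_
  intro z
  simp [h]

lemma classes {k j : ℕ} (φ : Q (4 * k + 1) → Q (4 * k + 1)) (hbij : Function.Bijective φ)
    (h : ∀ x y, hammingDist x y = 2 * k → hammingDist (φ x) (φ y) = 2 * k)
    (x y : Q (4 * k + 1)) (hxy : hammingDist x y = 2 * j) :
    hammingDist (φ x) (φ y) = 2 * j ∨ hammingDist (φ x) (φ y) + 2 * j = 4 * k + 2 := by
  have hN := N_map φ hbij (dist_iff φ hbij h) x y
  have h1 := N_central x y hxy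
  have hpos := Nat.mul_pos (Nat.centralBinom_pos j) (Nat.centralBinom_pos (2 * k + 1 - j))
  obtain ⟨i, hi⟩ := N_odd (φ x) (φ y) (m := 2 * k) (by omega)
  have h2 := N_central (φ x) (φ y) hi
  have l1 := le_n x y
  have l2 := le_n (φ x) (φ y)
  rcases cb_inj (a := i) (b := 2 * k + 1 - i) (c := j) (e := 2 * k + 1 - j) (by omega)
    (by rw [← h1, ← h2, hN]) with q | q <;> omega

lemma small {k : ℕ} (φ : Q (4 * k + 1) → Q (4 * k + 1)) (hbij : Function.Bijective φ)
    (h : ∀ x y, hammingDist x y = 2 * k → hammingDist (φ x) (φ y) = 2 * k) (i : ℕ) :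
    ∀ j, j + i = k → ∀ x y, hammingDist x y = 2 * j → hammingDist (φ x) (φ y) = 2 * j := by
  induction i with
  | zero => intro j hj; obtain rfl : j = k := by omega
            exact h
  | succ i ih =>
    intro j hj x z hxz
    obtain ⟨y, hy1, hy2⟩ := dist_step x z (by omega)
    have e1 := ih (j + 1) (by omega) x y (by omega)
    have e2 := classes (j := 1) φ hbij h y z (by omega)
    have e3 := classes φ hbij h x z hxz
    have p := perimeter (φ x) (φ y) (φ z)
    have t := hammingDist_triangle (φ x) (φ y) (φ z)
    omega

lemma even {k j : ℕ} (φ : Q (4 * k + 1) → Q (4 * k + 1)) (hbij : Function.Bijective φ)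
    (h : ∀ x y, hammingDist x y = 2 * k → hammingDist (φ x) (φ y) = 2 * k)
    (x y : Q (4 * k + 1)) (hxy : hammingDist x y = 2 * j) :
    hammingDist (φ x) (φ y) = 2 * j := by
  by_cases hj : j ≤ k
  · exact small φ hbij h (k - j) j (by omega) x y hxy
  · have l1 := le_n x y
    rcases classes φ hbij h x y hxy with q | q
    · exact q
    · have := (dist_iff φ hbij (small φ hbij h (k - (2 * k + 1 - j)) (2 * k + 1 - j) (by omega)) x y).1
        (by omega)
      omega

end TripleIso

/-- For `n ≡ 1 (mod 4)`, every `{(n-1)/2, (n+1)/2, n}`-isometry of the Boolean cube `C_n`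
fixing `0̄` is an isometry. -/
theorem tripleIsometry_one_mod_four (n : ℕ) (hn : n % 4 = 1)
    (φ : (Fin n → ZMod 2) → Fin n → ZMod 2) (hbij : Function.Bijective φ)
    (h0 : φ 0 = 0)
    (hφ : ∀ x y, (hammingDist x y = (n - 1) / 2 ∨ hammingDist x y = (n + 1) / 2 ∨
        hammingDist x y = n) →
      hammingDist (φ x) (φ y) = hammingDist x y) :
    ∀ x y, hammingDist (φ x) (φ y) = hammingDist x y := by
  obtain ⟨k, rfl⟩ : ∃ k, n = 4 * k + 1 := ⟨n / 4, by omega⟩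
  have h : ∀ x y, hammingDist x y = 2 * k → hammingDist (φ x) (φ y) = 2 * k := by
    intro x y hxy
    rw [hφ x y (by omega), hxy]
  intro x y
  rcases Nat.even_or_odd' (hammingDist x y) with ⟨j, hj | hj⟩
  · rw [TripleIso.even φ hbij h x y hj, hj]
  · obtain ⟨y', hy'⟩ := TripleIso.exists_antipode y
    have e1 := TripleIso.antipode x y y' hy'
    have e2 := TripleIso.antipode (φ x) (φ y) (φ y') (by rw [hφ y y' (by omega), hy'])
    have e3 := TripleIso.even (j := 2 * k - j) φ hbij h x y' (by omega)
    omega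
end
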